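/- Let f_1,…,f_N : I → I be strictly increasing maps of I = [0,1] into itself and fix an admissibility relation on pairs of symbols. For every finite admissible sequence of iterations (w_0,x_0),…,(w_n,x_n) (meaning each pair (w_i,w_{i+1}) is admissible and x_{i+1} = f_{w_i}(x_i)) there exists a downwards monotonous finite admissible sequence of iterations (w'_0,x'_0),…,(w'_{n'},x'_{n'}) with the same starting point (w'_0,x'_0) = (w_0,x_0), the same final symbol w'_{n'} = w_n, and final point x'_{n'} ≤ x_n. -/

import Mathlib

open Set

/-- from every finite admissible sequence of iterations one can extract a
downwards monotonous admissible sequence with the same starting point, the same final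
symbol, and a final point not above the original final point. -/
theorem statement12 {N : ℕ} (adm : Fin N → Fin N → Prop) (f : Fin N → ℝ → ℝ)
    (hmono : ∀ k, StrictMonoOn (f k) (Icc 0 1))
    (hmaps : ∀ k, MapsTo (f k) (Icc 0 1) (Icc 0 1))
    (n : ℕ) (w : ℕ → Fin N) (x : ℕ → ℝ) (hx0 : x 0 ∈ Icc (0:ℝ) 1)
    (hadm : ∀ i < n, adm (w i) (w (i + 1)))
    (hit : ∀ i < n, x (i + 1) = f (w i) (x i)) :
    ∃ (n' : ℕ) (w' : ℕ → Fin N) (x' : ℕ → ℝ),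
      w' 0 = w 0 ∧ x' 0 = x 0 ∧
      (∀ i < n', adm (w' i) (w' (i + 1))) ∧
      (∀ i < n', x' (i + 1) = f (w' i) (x' i)) ∧
      (∀ i j, i < j → j ≤ n' → w' i = w' j → x' j < x' i) ∧
      w' n' = w n ∧ x' n' ≤ x n := by
  induction n using Nat.strong_induction_on generalizing w x with
  | _ n ih =>
    by_cases hdown : ∀ i j, i < j → j ≤ n → w i = w j → x j < x i
    · exact ⟨n, w, x, rfl, rfl, hadm, hit, hdown, rfl, le_rfl⟩
    push Not at hdown
    obtain ⟨i, j, hij, hjn, hw, hx⟩ := hdown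
    obtain ⟨d, rfl⟩ := Nat.exists_eq_add_of_lt hij
    obtain ⟨m, rfl⟩ := Nat.exists_eq_add_of_le hjn
    -- Cut out the loop between the two occurrences of the repeated symbol.
    let v : ℕ → Fin N := fun k => if k ≤ i then w k else w (k + d + 1)
    let y : ℕ → ℝ := fun k => Nat.rec (x 0) (fun l z => f (v l) z) k
    have hv_le : ∀ k ≤ i, v k = w k := fun k hk => if_pos hk
    have hv_ge : ∀ k, v (i + k) = w (i + d + 1 + k) := by
      intro k
      rcases Nat.eq_zero_or_pos k with rfl | hk
      · simpa [v] using hw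
      · have h : ¬ i + k ≤ i := by omega
        simp only [v, if_neg h]
        congr 1
        omega
    have hy_succ : ∀ k, y (k + 1) = f (v k) (y k) := fun k => rfl
    have hx_mem : ∀ k ≤ i + d + 1 + m, x k ∈ Icc (0 : ℝ) 1 := by
      intro k
      induction k with
      | zero => exact fun _ => hx0
      | succ k ihk =>
        intro hk
        rw [hit k (by omega)]
        exact hmaps _ (ihk (by omega))
    have hy_mem : ∀ k, y k ∈ Icc (0 : ℝ) 1 := by
      intro k
      induction k with
      | zero => exact hx0
      | succ k ihk => exact hmaps _ ihk
    have hy_eq : ∀ k ≤ i, y k = x k := by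
      intro k
      induction k with
      | zero => exact fun _ => rfl
      | succ k ihk =>
        intro hk
        rw [hy_succ, ihk (by omega), hit k (by omega), hv_le k (by omega)]
    have hy_le : ∀ k ≤ m, y (i + k) ≤ x (i + d + 1 + k) := by
      intro k
      induction k with
      | zero => exact fun _ => (hy_eq i le_rfl).trans_le hx
      | succ k ihk =>
        intro hk
        rw [← add_assoc, ← add_assoc, hy_succ, hit _ (by omega), hv_ge]
        exact (hmono _).monotoneOn (hy_mem _) (hx_mem _ (by omega)) (ihk (by omega))
    have hv_adm : ∀ k < i + m, adm (v k) (v (k + 1)) := by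
      intro k hk
      rcases lt_or_ge k i with hki | hki
      · rw [hv_le k hki.le, hv_le (k + 1) hki]
        exact hadm k (by omega)
      · obtain ⟨l, rfl⟩ := Nat.exists_eq_add_of_le hki
        rw [add_assoc i, hv_ge, hv_ge]
        exact hadm _ (by omega)
    obtain ⟨n', w', x', hw0, hx0', hadm', hit', hdown', hwn, hxn⟩ :=
      ih (i + m) (by omega) v y hx0 hv_adm (fun k _ => hy_succ k)
    exact ⟨n', w', x', hw0.trans (hv_le 0 (Nat.zero_le i)), hx0', hadm', hit', hdown',
      hwn.trans (hv_ge m), hxn.trans (hy_le m le_rfl)⟩
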